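/- arXiv:1602.06732 — 2 statements merged into one kernel-verified Lean document; each statement's English description precedes it below -/
import Mathlib

section
/- Let n ≥ 2 and 1 ≤ k ≤ n. Define polynomials π_1,…,π_n ∈ ℝ[x_1,…,x_n] by π_i = s_{2i} for 1 ≤ i ≤ ⌊n/2⌋, π_{⌊n/2⌋+1} = e_n = x_1⋯x_n, and π_i = s_{2i−2} for ⌊n/2⌋+1 < i ≤ n. Let f_1,…,f_m ∈ ℝ[x_1,…,x_n] be polynomials each belonging to the ℝ-subalgebra generated by π_1,…,π_k. If the real variety X = {x ∈ ℝ^n : f_1(x) = ⋯ = f_m(x) = 0} is nonempty, then X contains a point of H_k(D_n), i.e. there exists x ∈ X such that either x has exactly one zero coordinate and its nonzero coordinates take at most k−1 distinct absolute values, or x does not have exactly one zero coordinate and its nonzero coordinates take at most k distinct absolute values. -/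
open MvPolynomial

/-- The basic invariants `π₁, …, πₙ` of the reflection group `Dₙ` (equation (2.2)):
`πᵢ = s_{2i}` for `1 ≤ i ≤ ⌊n/2⌋`, `π_{⌊n/2⌋+1} = eₙ = x₁⋯xₙ`, and
`πᵢ = s_{2i-2}` for `⌊n/2⌋+1 < i ≤ n`. -/
noncomputable def basicInvariantDn (n i : ℕ) : MvPolynomial (Fin n) ℝ :=
  if i ≤ n / 2 then psum (Fin n) ℝ (2 * i)
  else if i = n / 2 + 1 then ∏ j, X j
  else psum (Fin n) ℝ (2 * i - 2)

/-- Membership in the stratum `H_k(Dₙ)` of the reflection arrangement of `Dₙ`: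
either `x` has exactly one zero coordinate and its nonzero coordinates take at most
`k-1` distinct absolute values, or `x` does not have exactly one zero coordinate
and its nonzero coordinates take at most `k` distinct absolute values. -/
def memStratumDn {n : ℕ} (k : ℕ) (x : Fin n → ℝ) : Prop :=
  ({i | x i = 0}.ncard = 1 ∧ ((fun i => |x i|) '' {i | x i ≠ 0}).ncard ≤ k - 1) ∨
  ({i | x i = 0}.ncard ≠ 1 ∧ ((fun i => |x i|) '' {i | x i ≠ 0}).ncard ≤ k)

/-!
Let `x` be a local extremum of one of the polynomials `q, s₂, …, s_{2d}` on a fibre of the others.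
By Lagrange multipliers their gradients at `x` are linearly dependent. For `q = eₙ`, multiplying the
`i`-th component of this relation by `xᵢ` turns it into a polynomial equation of degree at most `d`
for `xᵢ²`, the same for all `i` and nontrivial if at most one coordinate vanishes: the coordinates
of `x` then take at most `d` absolute values, zero included. For a coordinate function `q` that
vanishes at `x`, the multiplier of `q` is `0`, which leaves at most `d - 1` nonzero absolute values.

Fibres of even power sums are compact, so extrema exist. If `k ≤ ⌊n/2⌋`, maximise `eₙ` on the fibre
of `s₂, …, s_{2k}`; should the maximum be `0`, move to a point of the same fibre with a zero
coordinate and at most `k` nonzero absolute values, which is again a maximum of `eₙ`. If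
`k > ⌊n/2⌋`, maximise `s_{2k}` while keeping `s₂, …, s_{2k-2}` and `eₙ`, where for `eₙ = 0` one
keeps a vanishing coordinate instead.
-/

section GradientAt

variable {σ R : Type*} [CommSemiring R]

/-- The gradient of the polynomial `p` at the point `x`. -/
noncomputable def gradientAt (p : MvPolynomial σ R) (x : σ → R) : σ → R :=
  fun s => eval x (pderiv s p)

theorem gradientAt_C (a : R) (x : σ → R) : gradientAt (C a) x = 0 := by
  ext s
  simp [gradientAt]

theorem gradientAt_X [DecidableEq σ] (s : σ) (x : σ → R) :
    gradientAt (X s) x = Pi.single s 1 := by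
  ext t
  rcases eq_or_ne t s with rfl | h
  · simp [gradientAt]
  · simp [gradientAt, pderiv_X_of_ne h.symm, h]

theorem gradientAt_add (p q : MvPolynomial σ R) (x : σ → R) :
    gradientAt (p + q) x = gradientAt p x + gradientAt q x := by
  ext s
  simp [gradientAt]

theorem gradientAt_mul (p q : MvPolynomial σ R) (x : σ → R) :
    gradientAt (p * q) x = eval x p • gradientAt q x + eval x q • gradientAt p x := by
  ext s
  simp [gradientAt]

variable [Fintype σ]

theorem gradientAt_psum (m : ℕ) (x : σ → R) (s : σ) :
    gradientAt (psum σ R m) x s = m * x s ^ (m - 1) := by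
  classical
  simp [gradientAt, psum, pderiv_X, Pi.single_apply, apply_ite]

theorem gradientAt_prod_X [DecidableEq σ] (x : σ → R) (s : σ) :
    gradientAt (∏ i, X i) x s = ∏ i ∈ Finset.univ.erase s, x i := by
  have hconst : pderiv s (∏ i ∈ Finset.univ.erase s, (X i : MvPolynomial σ R)) = 0 := by
    refine Finset.prod_induction _ (fun p => pderiv s p = 0) (fun p q hp hq => ?_) (by simp) ?_
    · rw [pderiv_mul, hp, hq, zero_mul, mul_zero, add_zero]
    · exact fun i hi => pderiv_X_of_ne (Finset.ne_of_mem_erase hi)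
  rw [← Finset.mul_prod_erase _ _ (Finset.mem_univ s)]
  simp [gradientAt, hconst]

theorem mul_gradientAt_prod_X (x : σ → R) (s : σ) :
    x s * gradientAt (∏ i, X i) x s = ∏ i, x i := by
  classical
  rw [gradientAt_prod_X, Finset.mul_prod_erase _ _ (Finset.mem_univ s)]

end GradientAt

section LagrangeMultipliers

variable {σ κ : Type*}

theorem hasStrictFDerivAt_eval [Fintype σ] [DecidableEq σ] (p : MvPolynomial σ ℝ) (x : σ → ℝ) :
    HasStrictFDerivAt (fun y => eval y p)
      (LinearMap.toContinuousLinearMap (dotProductEquiv ℝ σ (gradientAt p x))) x := by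
  induction p using MvPolynomial.induction_on with
  | C a =>
    simp only [eval_C]
    refine (hasStrictFDerivAt_const a x).congr_fderiv ?_
    ext v
    simp [gradientAt_C]
  | add p q hp hq =>
    simp only [map_add]
    refine (hp.add hq).congr_fderiv ?_
    ext v
    simp [gradientAt_add]
  | mul_X p s hp =>
    simp only [map_mul, eval_X]
    refine (hp.mul (hasStrictFDerivAt_apply s x)).congr_fderiv ?_
    ext v
    simp [gradientAt_mul, gradientAt_X]

/-- The common level set through `x` of all members of the family `p` other than `p i₀`. -/
def levelSetExcept (p : κ → MvPolynomial σ ℝ) (i₀ : κ) (x : σ → ℝ) : Set (σ → ℝ) :=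
  {y | ∀ i ≠ i₀, eval y (p i) = eval x (p i)}

theorem levelSetExcept_eq_of_mem {p : κ → MvPolynomial σ ℝ} {i₀ : κ} {x y : σ → ℝ}
    (h : y ∈ levelSetExcept p i₀ x) : levelSetExcept p i₀ y = levelSetExcept p i₀ x :=
  Set.ext fun _ => forall₂_congr fun i hi => by rw [h i hi]

theorem not_linearIndependent_gradientAt_of_isLocalExtrOn [Finite σ] [Finite κ]
    {p : κ → MvPolynomial σ ℝ} {i₀ : κ} {x : σ → ℝ}
    (hx : IsLocalExtrOn (fun y => eval y (p i₀)) (levelSetExcept p i₀ x) x) :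
    ¬LinearIndependent ℝ fun i => gradientAt (p i) x := by
  classical
  cases nonempty_fintype σ
  intro hli
  let toDual := (dotProductEquiv ℝ σ).trans LinearMap.toContinuousLinearMap
  have hdep := IsLocalExtrOn.linear_dependent_of_hasStrictFDerivAt
    (f := fun (i : {i // i ≠ i₀}) y => eval y (p i)) (by simpa [levelSetExcept] using! hx)
    (fun i => hasStrictFDerivAt_eval (p i) x) (hasStrictFDerivAt_eval (p i₀) x)
  have helim : (Option.elim' (toDual (gradientAt (p i₀) x)) fun i : {i // i ≠ i₀} =>
      toDual (gradientAt (p i) x)) =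
        (fun i => toDual (gradientAt (p i) x)) ∘ Equiv.optionSubtypeNe i₀ := by
    ext1 (_ | i) <;> simp
  refine hdep (helim ▸ ?_)
  exact (hli.map' toDual.toLinearMap toDual.ker).comp _ (Equiv.optionSubtypeNe i₀).injective

theorem isClosed_levelSetExcept (p : κ → MvPolynomial σ ℝ) (i₀ : κ) (x : σ → ℝ) :
    IsClosed (levelSetExcept p i₀ x) := by
  simp only [levelSetExcept, Set.ofPred_forall]
  exact isClosed_iInter fun i => isClosed_iInter fun _ =>
    isClosed_eq (continuous_eval (p i)) continuous_const

variable [Fintype σ]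

theorem norm_le_sqrt_eval_psum_two (x : σ → ℝ) : ‖x‖ ≤ √(eval x (psum σ ℝ 2)) := by
  refine (pi_norm_le_iff_of_nonneg (Real.sqrt_nonneg _)).2 fun s => Real.abs_le_sqrt ?_
  simpa [psum] using
    Finset.single_le_sum (f := fun i => x i ^ 2) (fun i _ => sq_nonneg _) (Finset.mem_univ s)

theorem isCompact_levelSetExcept {p : κ → MvPolynomial σ ℝ} {i₀ i₁ : κ} (hne : i₁ ≠ i₀)
    (hp : p i₁ = psum σ ℝ 2) (x : σ → ℝ) : IsCompact (levelSetExcept p i₀ x) := by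
  refine (isCompact_closedBall 0 √(eval x (psum σ ℝ 2))).of_isClosed_subset
    (isClosed_levelSetExcept p i₀ x) fun y hy => mem_closedBall_zero_iff.2 ?_
  rw [← hp, ← hy i₁ hne, hp]
  exact norm_le_sqrt_eval_psum_two y

theorem exists_isMaxOn_levelSetExcept {p : κ → MvPolynomial σ ℝ} {i₀ i₁ : κ} (hne : i₁ ≠ i₀)
    (hp : p i₁ = psum σ ℝ 2) (x₀ : σ → ℝ) :
    ∃ x ∈ levelSetExcept p i₀ x₀, IsMaxOn (fun y => eval y (p i₀)) (levelSetExcept p i₀ x₀) x :=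
  (isCompact_levelSetExcept hne hp x₀).exists_isMaxOn ⟨x₀, fun _ _ => rfl⟩
    (continuous_eval (p i₀)).continuousOn

end LagrangeMultipliers

section Counting

theorem ncard_lt_of_sum_mul_pow_eq_zero {R : Type*} [CommRing R] [IsDomain R] {m : ℕ}
    {c : Fin m → R} (hc : c ≠ 0) {T : Set R} (hT : ∀ t ∈ T, ∑ j, c j * t ^ (j : ℕ) = 0) :
    T.ncard < m := by
  classical
  set P := Polynomial.ofFn m c with hP
  have hP0 : P ≠ 0 := (map_ne_zero_iff _ (Polynomial.injective_ofFn m)).2 hc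
  have hTP : T ⊆ P.rootSet R := fun t ht => by
    refine Polynomial.mem_rootSet.2 ⟨hP0, ?_⟩
    simpa [hP, Polynomial.ofFn_eq_sum_monomial] using hT t ht
  calc T.ncard ≤ (P.rootSet R).ncard := Set.ncard_le_ncard hTP (P.rootSet_finite R)
    _ ≤ P.natDegree := P.ncard_rootSet_le R
    _ < m := Polynomial.ofFn_natDegree_lt
      (Nat.one_le_iff_ne_zero.2 (Polynomial.ne_zero_of_ofFn_ne_zero hP0)) c

variable {σ R : Type*} [CommRing R] [LinearOrder R] [IsStrictOrderedRing R]

theorem ncard_image_abs_lt_of_sum_mul_pow_eq_zero {m : ℕ} {c : Fin m → R} (hc : c ≠ 0)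
    {x : σ → R} {S : Set σ} (hS : ∀ s ∈ S, ∑ j, c j * (x s ^ 2) ^ (j : ℕ) = 0) :
    ((fun s => |x s|) '' S).ncard < m := by
  have hinj : Set.InjOn (fun t : R => t ^ 2) ((fun s => |x s|) '' S) := by
    rintro _ ⟨s, -, rfl⟩ _ ⟨t, -, rfl⟩ hst
    simpa using sq_eq_sq_iff_abs_eq_abs _ _ |>.1 hst
  rw [← hinj.ncard_image, Set.image_image]
  refine ncard_lt_of_sum_mul_pow_eq_zero hc ?_
  rintro _ ⟨s, hs, rfl⟩
  simpa only [sq_abs] using hS s hs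

end Counting

section EvenPowerSums

variable {σ R : Type*} [Fintype σ]

/-- The points `x` and `y` have the same even power sums `s₂, s₄, …, s_{2d}`. -/
def EvenPsumEq [CommSemiring R] (d : ℕ) (x y : σ → R) : Prop :=
  ∀ j, 1 ≤ j → j ≤ d → eval x (psum σ R (2 * j)) = eval y (psum σ R (2 * j))

/-- The family `q, s₂, s₄, …, s_{2d}`; the index `some j` stands for `s_{2(j+1)}`, since `Fin d`
starts at `0`. -/
noncomputable def withEvenPsums [CommSemiring R] (q : MvPolynomial σ R) (d : ℕ) :
    Option (Fin d) → MvPolynomial σ R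
  | none => q
  | some j => psum σ R (2 * (j + 1))

theorem exists_relation_of_not_linearIndependent_withEvenPsums [CommRing R] [IsDomain R]
    [CharZero R] {q : MvPolynomial σ R} {d : ℕ} {x : σ → R}
    (h : ¬LinearIndependent R fun i => gradientAt (withEvenPsums q d i) x) :
    ∃ (b : R) (c : Fin d → R), (b ≠ 0 ∨ c ≠ 0) ∧
      ∀ s, b * gradientAt q x s + x s * ∑ j, c j * (x s ^ 2) ^ (j : ℕ) = 0 := by
  obtain ⟨g, hg, i, hi⟩ := Fintype.not_linearIndependent_iff.1 h
  refine ⟨g none, fun j => g (some j) * (2 * (j + 1) : ℕ), ?_, fun s => ?_⟩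
  · rcases i with _ | j
    · exact Or.inl hi
    · exact Or.inr fun h0 => mul_ne_zero hi (Nat.cast_ne_zero.2 (by lia)) (congrFun h0 j)
  · have hs := congrFun hg s
    simp only [Fintype.sum_option, withEvenPsums, Finset.sum_apply, Pi.smul_apply,
      smul_eq_mul, gradientAt_psum, Pi.zero_apply] at hs
    rw [← hs, Finset.mul_sum]
    congr! 2 with j
    rw [show 2 * ((j : ℕ) + 1) - 1 = 2 * j + 1 by lia]
    ring

section AbsoluteValues

variable [CommRing R] [LinearOrder R] [IsStrictOrderedRing R] {d : ℕ} {x : σ → R}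

theorem ncard_range_abs_le_of_not_linearIndependent_prod_X
    (h : ¬LinearIndependent R fun i => gradientAt (withEvenPsums (∏ i, X i) d i) x)
    (hx : {s | x s = 0}.Subsingleton) : (Set.range fun s => |x s|).ncard ≤ d := by
  classical
  obtain ⟨b, c, hbc, hrel⟩ := exists_relation_of_not_linearIndependent_withEvenPsums h
  rw [← Set.image_univ, ← Nat.lt_succ_iff]
  refine ncard_image_abs_lt_of_sum_mul_pow_eq_zero (c := Fin.cons (b * ∏ i, x i) c) ?_ fun s _ => ?_
  · intro hzero
    have hb : b * ∏ i, x i = 0 := congrFun hzero 0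
    have hc : c = 0 := funext fun j => congrFun hzero j.succ
    have hb0 : b ≠ 0 := hbc.resolve_right (not_not_intro hc)
    obtain ⟨s, -, hs⟩ := Finset.prod_eq_zero_iff.1 ((mul_eq_zero.1 hb).resolve_left hb0)
    have hgrad : ∏ i ∈ Finset.univ.erase s, x i = 0 := by
      simpa [hb0, hc, gradientAt_prod_X] using hrel s
    obtain ⟨t, ht, ht0⟩ := Finset.prod_eq_zero_iff.1 hgrad
    exact Finset.ne_of_mem_erase ht (hx ht0 hs)
  · calc ∑ j, (Fin.cons (b * ∏ i, x i) c : Fin (d + 1) → R) j * (x s ^ 2) ^ (j : ℕ)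
      _ = x s * (b * gradientAt (∏ i, X i) x s + x s * ∑ j, c j * (x s ^ 2) ^ (j : ℕ)) := by
        simp only [Fin.sum_univ_succ, Fin.cons_zero, Fin.cons_succ, Fin.val_zero, Fin.val_succ,
          pow_succ _ (Fin.val _), ← mul_assoc, ← Finset.sum_mul, ← mul_gradientAt_prod_X x s]
        ring
      _ = 0 := by rw [hrel s, mul_zero]

theorem ncard_nonzero_abs_lt_of_not_linearIndependent_X {s₀ : σ}
    (h : ¬LinearIndependent R fun i => gradientAt (withEvenPsums (X s₀) d i) x)
    (hx : x s₀ = 0) : ((fun s => |x s|) '' {s | x s ≠ 0}).ncard < d := by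
  classical
  obtain ⟨b, c, hbc, hrel⟩ := exists_relation_of_not_linearIndependent_withEvenPsums h
  have hb : b = 0 := by simpa [gradientAt_X, hx] using hrel s₀
  refine ncard_image_abs_lt_of_sum_mul_pow_eq_zero (hbc.resolve_left (not_not_intro hb))
    fun s hs => ?_
  exact (mul_eq_zero.1 (by simpa [hb] using hrel s)).resolve_left hs

end AbsoluteValues

variable {q : MvPolynomial σ ℝ} {d : ℕ}

theorem levelSetExcept_withEvenPsums_none (x : σ → ℝ) :
    levelSetExcept (withEvenPsums q d) none x = {y | EvenPsumEq d y x} := by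
  ext y
  refine ⟨fun h j h1 hd => ?_, ?_⟩
  · simpa [withEvenPsums, Nat.sub_add_cancel h1] using
      h (some ⟨j - 1, by lia⟩) (Option.some_ne_none _)
  · rintro h (_ | j) hj
    · exact absurd rfl hj
    · exact h (j + 1) (by lia) (by lia)

theorem mem_levelSetExcept_withEvenPsums_last {x y : σ → ℝ}
    (h : y ∈ levelSetExcept (withEvenPsums q (d + 1)) (some (Fin.last d)) x) :
    eval y q = eval x q ∧ EvenPsumEq d y x := by
  refine ⟨h none (Option.some_ne_none _).symm, fun j h1 hd => ?_⟩
  have hne : (⟨j - 1, by lia⟩ : Fin (d + 1)) ≠ Fin.last d := Fin.ne_of_lt (by grind)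
  simpa [withEvenPsums, Nat.sub_add_cancel h1] using
    h (some ⟨j - 1, by lia⟩) (by simpa using hne)

theorem ncard_range_abs_le_of_isMaxOn {x : σ → ℝ}
    (hmax : IsMaxOn (fun y => eval y (∏ i, X i)) {y | EvenPsumEq d y x} x)
    (hx : {s | x s = 0}.Subsingleton) : (Set.range fun s => |x s|).ncard ≤ d := by
  rw [← levelSetExcept_withEvenPsums_none (q := ∏ i, X i)] at hmax
  exact ncard_range_abs_le_of_not_linearIndependent_prod_X
    (not_linearIndependent_gradientAt_of_isLocalExtrOn (Or.inr hmax.localize)) hx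

theorem exists_isMaxOn_evenPsumEq (hd : 1 ≤ d) (q : MvPolynomial σ ℝ) (x₀ : σ → ℝ) :
    ∃ x, EvenPsumEq d x x₀ ∧ IsMaxOn (fun y => eval y q) {y | EvenPsumEq d y x} x := by
  have hpsum : withEvenPsums q d (some ⟨0, hd⟩) = psum σ ℝ 2 := rfl
  obtain ⟨x, hx, hmax⟩ := exists_isMaxOn_levelSetExcept (Option.some_ne_none _) hpsum x₀
  rw [← levelSetExcept_eq_of_mem hx] at hmax
  rw [levelSetExcept_withEvenPsums_none] at hx hmax
  exact ⟨x, hx, hmax⟩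

theorem exists_evenPsumEq_not_linearIndependent (hd : 1 ≤ d) (q : MvPolynomial σ ℝ)
    (x₀ : σ → ℝ) :
    ∃ x, eval x q = eval x₀ q ∧ EvenPsumEq d x x₀ ∧
      ¬LinearIndependent ℝ fun i => gradientAt (withEvenPsums q (d + 1) i) x := by
  have hne : (some 0 : Option (Fin (d + 1))) ≠ some (Fin.last d) := by
    simpa [Fin.ext_iff] using (Nat.ne_of_lt hd)
  obtain ⟨x, hx, hmax⟩ := exists_isMaxOn_levelSetExcept (p := withEvenPsums q (d + 1)) hne rfl x₀
  rw [← levelSetExcept_eq_of_mem hx] at hmax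
  obtain ⟨hq, hpsum⟩ := mem_levelSetExcept_withEvenPsums_last hx
  exact ⟨x, hq, hpsum, not_linearIndependent_gradientAt_of_isLocalExtrOn (Or.inr hmax.localize)⟩

theorem exists_evenPsumEq_ncard_nonzero_abs_le (hd : 1 ≤ d) {x₀ : σ → ℝ} {s₀ : σ}
    (h₀ : x₀ s₀ = 0) :
    ∃ x, x s₀ = 0 ∧ EvenPsumEq d x x₀ ∧ ((fun s => |x s|) '' {s | x s ≠ 0}).ncard ≤ d := by
  obtain ⟨x, hx, hpsum, hdep⟩ := exists_evenPsumEq_not_linearIndependent hd (X s₀) x₀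
  simp only [eval_X, h₀] at hx
  exact ⟨x, hx, hpsum,
    Nat.lt_succ_iff.1 (ncard_nonzero_abs_lt_of_not_linearIndependent_X hdep hx)⟩

theorem exists_evenPsumEq_ncard_range_abs_le (hd : 1 ≤ d) {x₀ : σ → ℝ} (h₀ : ∏ s, x₀ s ≠ 0) :
    ∃ x, ∏ s, x s = ∏ s, x₀ s ∧ EvenPsumEq d x x₀ ∧
      (Set.range fun s => |x s|).ncard ≤ d + 1 := by
  obtain ⟨x, hx, hpsum, hdep⟩ := exists_evenPsumEq_not_linearIndependent hd (∏ s, X s) x₀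
  simp only [eval_prod, eval_X] at hx
  refine ⟨x, hx, hpsum, ncard_range_abs_le_of_not_linearIndependent_prod_X hdep ?_⟩
  exact fun s hs => absurd (Finset.prod_eq_zero (Finset.mem_univ s) hs) (hx ▸ h₀)

end EvenPowerSums

section Strata

variable {n k : ℕ} {x y : Fin n → ℝ}

theorem memStratumDn_of_ncard_range_abs_le (h : (Set.range fun i => |x i|).ncard ≤ k) :
    memStratumDn k x := by
  have himage : (fun i => |x i|) '' {i | x i ≠ 0} = (Set.range fun i => |x i|) \ {0} := by
    ext t
    aesop
  rw [memStratumDn, himage]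
  by_cases hone : {i | x i = 0}.ncard = 1
  · obtain ⟨i, hi⟩ := Set.ncard_eq_one.1 hone
    have hxi : x i = 0 := hi.symm.subset rfl
    have hzero : 0 ∈ Set.range fun i => |x i| := ⟨i, by simp [hxi]⟩
    exact Or.inl ⟨hone, by grw [Set.ncard_sdiff_singleton_of_mem hzero, h]⟩
  · exact Or.inr ⟨hone, (Set.ncard_sdiff_singleton_le _ _).trans h⟩

theorem memStratumDn_of_ncard_nonzero_abs_le
    (h : ((fun i => |x i|) '' {i | x i ≠ 0}).ncard ≤ k - 1) : memStratumDn k x := by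
  by_cases hone : {i | x i = 0}.ncard = 1
  · exact Or.inl ⟨hone, h⟩
  · exact Or.inr ⟨hone, h.trans (Nat.sub_le k 1)⟩

theorem exists_evenPsumEq_memStratumDn (hk : 1 ≤ k) (x₀ : Fin n → ℝ) :
    ∃ x, EvenPsumEq k x x₀ ∧ memStratumDn k x := by
  obtain ⟨x, hx, hmax⟩ := exists_isMaxOn_evenPsumEq hk (∏ i, X i) x₀
  by_cases hprod : ∏ i, x i = 0
  · obtain ⟨i₀, -, hi₀⟩ := Finset.prod_eq_zero_iff.1 hprod
    obtain ⟨y, hy₀, hyx, hcard⟩ := exists_evenPsumEq_ncard_nonzero_abs_le hk hi₀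
    refine ⟨y, fun j h1 hj => (hyx j h1 hj).trans (hx j h1 hj), ?_⟩
    by_cases hone : {i | y i = 0}.ncard = 1
    · have hmax_y : IsMaxOn (fun z => eval z (∏ i, X i)) {z | EvenPsumEq k z y} y := by
        intro z hz
        have hzx : EvenPsumEq k z x := fun j h1 hj => (hz j h1 hj).trans (hyx j h1 hj)
        simpa [hprod, Finset.prod_eq_zero (Finset.mem_univ i₀) hy₀] using hmax hzx
      refine memStratumDn_of_ncard_range_abs_le (ncard_range_abs_le_of_isMaxOn hmax_y ?_)
      exact Set.ncard_le_one_iff_subsingleton.1 hone.le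
    · exact Or.inr ⟨hone, hcard⟩
  · refine ⟨x, hx, memStratumDn_of_ncard_range_abs_le (ncard_range_abs_le_of_isMaxOn hmax ?_)⟩
    exact fun i hi => absurd (Finset.prod_eq_zero (Finset.mem_univ i) hi) hprod

theorem eval_basicInvariantDn_eq_of_le_half {i : ℕ} (hi : 1 ≤ i) (hin : i ≤ n / 2)
    (h : EvenPsumEq i x y) :
    eval x (basicInvariantDn n i) = eval y (basicInvariantDn n i) := by
  simpa [basicInvariantDn, hin] using h i hi le_rfl

theorem eval_basicInvariantDn_eq {i d : ℕ} (hi : 1 ≤ i) (hid : i ≤ d + 1) (hd : n / 2 ≤ d)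
    (hprod : ∏ j, x j = ∏ j, y j) (h : EvenPsumEq d x y) :
    eval x (basicInvariantDn n i) = eval y (basicInvariantDn n i) := by
  unfold basicInvariantDn
  split_ifs with hlow hmid
  · exact h i hi (hlow.trans hd)
  · simpa using hprod
  · rw [show 2 * i - 2 = 2 * (i - 1) by lia]
    exact h (i - 1) (by lia) (by lia)

theorem exists_memStratumDn_eval_basicInvariantDn_eq (hn : 2 ≤ n) (hk : 1 ≤ k)
    (x₀ : Fin n → ℝ) :
    ∃ x, (∀ i, 1 ≤ i → i ≤ k → eval x (basicInvariantDn n i) = eval x₀ (basicInvariantDn n i)) ∧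
      memStratumDn k x := by
  by_cases hkn : k ≤ n / 2
  · obtain ⟨x, hx, hmem⟩ := exists_evenPsumEq_memStratumDn hk x₀
    exact ⟨x, fun i hi hik => eval_basicInvariantDn_eq_of_le_half hi (hik.trans hkn)
      fun j h1 hj => hx j h1 (hj.trans hik), hmem⟩
  obtain ⟨d, rfl⟩ := Nat.exists_eq_add_of_le' hk
  by_cases hprod : ∏ i, x₀ i = 0
  · obtain ⟨i₀, -, hi₀⟩ := Finset.prod_eq_zero_iff.1 hprod
    obtain ⟨x, hxi₀, hx, hcard⟩ := exists_evenPsumEq_ncard_nonzero_abs_le (d := d) (by lia) hi₀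
    refine ⟨x, fun i hi hik => eval_basicInvariantDn_eq hi hik (by lia) ?_ hx,
      memStratumDn_of_ncard_nonzero_abs_le hcard⟩
    rw [hprod, Finset.prod_eq_zero (Finset.mem_univ i₀) hxi₀]
  · obtain ⟨x, hxprod, hx, hcard⟩ := exists_evenPsumEq_ncard_range_abs_le (d := d) (by lia) hprod
    exact ⟨x, fun i hi hik => eval_basicInvariantDn_eq hi hik (by lia) hxprod hx,
      memStratumDn_of_ncard_range_abs_le hcard⟩

end Strata

theorem eval_eq_of_mem_adjoin {σ R : Type*} [CommSemiring R] {S : Set (MvPolynomial σ R)}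
    {x y : σ → R} (h : ∀ p ∈ S, eval x p = eval y p) {p : MvPolynomial σ R}
    (hp : p ∈ Algebra.adjoin R S) : eval x p = eval y p := by
  have hle : Algebra.adjoin R S ≤ AlgHom.equalizer (aeval x) (aeval y) :=
    AlgHom.adjoin_le_equalizer _ _ fun q hq => by simpa [coe_aeval_eq_eval] using h q hq
  simpa [coe_aeval_eq_eval] using hle hp

theorem degree_principle_Dn_general {n k : ℕ} (hn : 2 ≤ n) (hk : 1 ≤ k) {ι : Type*}
    (f : ι → MvPolynomial (Fin n) ℝ)
    (hf : ∀ j, f j ∈ Algebra.adjoin ℝ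
      {p : MvPolynomial (Fin n) ℝ | ∃ i, 1 ≤ i ∧ i ≤ k ∧ p = basicInvariantDn n i})
    (hX : ∃ x : Fin n → ℝ, ∀ j, eval x (f j) = 0) :
    ∃ x : Fin n → ℝ, (∀ j, eval x (f j) = 0) ∧ memStratumDn k x := by
  obtain ⟨x₀, hx₀⟩ := hX
  obtain ⟨x, hx, hmem⟩ := exists_memStratumDn_eval_basicInvariantDn_eq hn hk x₀
  refine ⟨x, fun j => ?_, hmem⟩
  have heval : eval x (f j) = eval x₀ (f j) := eval_eq_of_mem_adjoin
    (by rintro _ ⟨i, hi, hik, rfl⟩; exact hx i hi hik) (hf j)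
  rw [heval, hx₀ j]

/-- Theorem 1.2 for type `Dₙ`: a nonempty real variety defined by polynomials in the
first `k` basic invariants of `Dₙ` meets the stratum `H_k(Dₙ)`. -/
theorem degree_principle_Dn
    (n : ℕ) (hn : 2 ≤ n) (k : ℕ) (hk1 : 1 ≤ k) (hkn : k ≤ n)
    (m : ℕ) (f : Fin m → MvPolynomial (Fin n) ℝ)
    (hf : ∀ j, f j ∈ Algebra.adjoin ℝ
      {p : MvPolynomial (Fin n) ℝ | ∃ i, 1 ≤ i ∧ i ≤ k ∧ p = basicInvariantDn n i})
    (hX : ∃ x : Fin n → ℝ, ∀ j, eval x (f j) = 0) :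
    ∃ x : Fin n → ℝ, (∀ j, eval x (f j) = 0) ∧ memStratumDn k x :=
  degree_principle_Dn_general hn hk1 f hf hX
end

section
/- Let n ≥ 2 and let P be a polynomial function on the n×n real matrices (i.e. P is the evaluation of a polynomial in the n² matrix entries) such that P(g A g⁻¹) = P(A) for every invertible real matrix g with det g = 1 and every real matrix A with trace A = 0. Then there exists a polynomial F ∈ ℝ[y_2,…,y_n] such that P(A) = F(tr(A²), tr(A³), …, tr(Aⁿ)) for every real n×n matrix A with trace A = 0. -/
open MvPolynomial Matrix

/-!
A generic trace-zero matrix `A` is conjugate to the companion matrix of its characteristic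
polynomial, through the Krylov matrix with columns `e₀, A e₀, …, A ^ (n - 1) e₀`. Near the companion
matrix of `X ^ n` the determinant of the Krylov matrix is positive, so a real scalar multiple of it
has determinant `1`. Hence an `SL_n`-invariant polynomial takes the same value at `A` and at that
companion matrix for `A` in a nonempty open set of trace-zero matrices; both values are polynomial
in `A`, so they agree on every line through this open set, that is, everywhere. Newton's identities
express the coefficients of the characteristic polynomial through the traces of powers.
-/

theorem map_trace_pow {n R S : Type*} [Fintype n] [DecidableEq n] [Semiring R] [Semiring S]
    {F : Type*} [FunLike F R S] [RingHomClass F R S] (f : F) (M : Matrix n n R) (k : ℕ) :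
    f (M ^ k).trace = (M.map f ^ k).trace := by
  rw [AddMonoidHom.map_trace]
  exact congrArg trace (M.map_pow (f : R →+* S) k)

section Newton

open scoped Polynomial
open Finset.HasAntidiagonal (antidiagonal)

variable {n R : Type*} [Fintype n] [DecidableEq n] [CommRing R]

theorem derivative_det (M : Matrix n n R[X]) :
    Polynomial.derivative M.det = (M.adjugate * M.map Polynomial.derivative).trace := by
  have trace_eq_sum_det : (M.adjugate * M.map Polynomial.derivative).trace =
      ∑ j, (M.updateCol j fun i => Polynomial.derivative (M i j)).det := by
    simp only [← cramer_apply, cramer_eq_adjugate_mulVec]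
    rfl
  have prod_updateCol (σ : Equiv.Perm n) (j : n) :
      ∏ i, M.updateCol j (fun i => Polynomial.derivative (M i j)) (σ i) i =
        (∏ i ∈ Finset.univ.erase j, M (σ i) i) * Polynomial.derivative (M (σ j) j) := by
    rw [← Finset.prod_erase_mul _ _ (Finset.mem_univ j), updateCol_self]
    congr 1
    exact Finset.prod_congr rfl fun i hi => updateCol_ne (Finset.ne_of_mem_erase hi)
  simp only [trace_eq_sum_det, det_apply, Polynomial.derivative_sum, Polynomial.derivative_smul,
    Polynomial.derivative_prod_finset, prod_updateCol, Finset.smul_sum]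
  exact Finset.sum_comm

theorem derivative_charpolyRev (M : Matrix n n R) :
    Polynomial.derivative M.charpolyRev =
      -((1 - (Polynomial.X : R[X]) • M.map Polynomial.C).adjugate * M.map Polynomial.C).trace := by
  have map_derivative :
      (1 - (Polynomial.X : R[X]) • M.map Polynomial.C).map Polynomial.derivative =
        -M.map Polynomial.C := by
    ext1 i j
    by_cases hij : i = j <;> simp [hij]
  rw [charpolyRev, derivative_det, map_derivative, mul_neg, trace_neg]

theorem X_pow_dvd_derivative_charpolyRev_add (M : Matrix n n R) (k : ℕ) :
    (Polynomial.X : R[X]) ^ k ∣ Polynomial.derivative M.charpolyRev + M.charpolyRev *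
      ∑ i ∈ Finset.range k, Polynomial.C (M ^ (i + 1)).trace * Polynomial.X ^ i := by
  set t : R[X] := Polynomial.X
  set N : Matrix n n R[X] := M.map Polynomial.C
  set S : Matrix n n R[X] := 1 - t • N
  have geom_sum : M.charpolyRev • ∑ i ∈ Finset.range k, t ^ i • N ^ (i + 1) =
      S.adjugate * N - t ^ k • (S.adjugate * N ^ (k + 1)) := calc
    _ = S.adjugate * ((S * ∑ i ∈ Finset.range k, (t • N) ^ i) * N) := by
      rw [Matrix.mul_assoc, ← Matrix.mul_assoc, adjugate_mul, smul_mul_assoc, one_mul,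
        Finset.sum_mul]
      simp only [smul_pow, smul_mul_assoc, ← pow_succ]
      rfl
    _ = _ := by
      rw [mul_neg_geom_sum, sub_mul, one_mul, mul_sub, smul_pow, smul_mul_assoc, mul_smul_comm,
        ← pow_succ]
  have trace_N_pow (i : ℕ) : (N ^ i).trace = Polynomial.C (M ^ i).trace :=
    (map_trace_pow Polynomial.C M i).symm
  have trace_geom_sum := congrArg Matrix.trace geom_sum
  simp only [trace_sub, trace_smul, trace_sum, trace_N_pow, smul_eq_mul] at trace_geom_sum
  refine ⟨-(S.adjugate * N ^ (k + 1)).trace, ?_⟩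
  simp only [mul_comm (Polynomial.C _), trace_geom_sum, derivative_charpolyRev]
  ring

-- Compare coefficients in `χ' = -χ ∑ tr(M ^ (i + 1)) Xⁱ`, where `χ = det (1 - X M)`.
theorem succ_mul_coeff_charpolyRev (M : Matrix n n R) (k : ℕ) :
    (k + 1) * M.charpolyRev.coeff (k + 1) =
      -∑ p ∈ antidiagonal k, M.charpolyRev.coeff p.1 * (M ^ (p.2 + 1)).trace := by
  have coeff_eq_zero := Polynomial.X_pow_dvd_iff.mp
    (X_pow_dvd_derivative_charpolyRev_add M (k + 1)) k k.lt_succ_self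
  rw [Polynomial.coeff_add, Polynomial.coeff_derivative, mul_comm] at coeff_eq_zero
  rw [eq_neg_of_add_eq_zero_left coeff_eq_zero, Polynomial.coeff_mul]
  congr 1
  refine Finset.sum_congr rfl fun p hp => ?_
  have : p.2 < k + 1 := by grind [Finset.HasAntidiagonal.mem_antidiagonal]
  simp [this]

theorem coeff_charpolyRev {i : ℕ} (M : Matrix n n R) (hi : i ≤ Fintype.card n) :
    M.charpolyRev.coeff i = M.charpoly.coeff (Fintype.card n - i) := by
  nontriviality R
  rw [← reverse_charpoly, Polynomial.coeff_reverse, charpoly_natDegree_eq_dim,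
    Polynomial.revAt_le hi]

theorem coeff_charpoly_mem_of_trace_pow_mem {K B : Type*} [CommRing K] [CommRing B] [Algebra K B]
    (hn : IsUnit ((Fintype.card n).factorial : K)) (S : Subalgebra K B) (M : Matrix n n B)
    (hS : ∀ k, 1 ≤ k → k ≤ Fintype.card n → (M ^ k).trace ∈ S) (i : ℕ) :
    M.charpoly.coeff i ∈ S := by
  nontriviality B
  have charpolyRev_mem (k : ℕ) (hk : k ≤ Fintype.card n) : M.charpolyRev.coeff k ∈ S := by
    induction k using Nat.strong_induction_on with
    | _ k ih =>
      rcases k with _ | k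
      · rw [Polynomial.coeff_zero_eq_eval_zero, eval_charpolyRev]
        exact S.one_mem
      have isUnit_succ : IsUnit ((k + 1 : ℕ) : K) :=
        isUnit_of_dvd_unit (Nat.cast_dvd_cast (Nat.dvd_factorial k.succ_pos hk)) hn
      have newton : ((k + 1 : ℕ) : K) • M.charpolyRev.coeff (k + 1) ∈ S := by
        rw [Nat.cast_smul_eq_nsmul, nsmul_eq_mul, Nat.cast_succ, succ_mul_coeff_charpolyRev]
        refine S.neg_mem (S.sum_mem fun p hp => ?_)
        rw [Finset.HasAntidiagonal.mem_antidiagonal] at hp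
        exact S.mul_mem (ih _ (by omega) (by omega)) (hS _ (by omega) (by omega))
      exact (S.toSubmodule.smul_mem_iff_of_isUnit isUnit_succ).mp newton
  rcases le_or_gt i (Fintype.card n) with hi | hi
  · rw [← Nat.sub_sub_self hi, ← coeff_charpolyRev M (Nat.sub_le _ _)]
    exact charpolyRev_mem _ (Nat.sub_le _ _)
  · rw [Polynomial.coeff_eq_zero_of_natDegree_lt (by rwa [charpoly_natDegree_eq_dim])]
    exact S.zero_mem

end Newton

section Companion

open scoped Polynomial

variable {n : ℕ} {R S : Type*} [CommRing R] [CommRing S]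

/-- The companion matrix of a monic polynomial `p` of degree `n`, with the lower-order
coefficients of `p`, negated, in the last column. Only those coefficients are used, so `p` need not
be monic of degree `n`. -/
def companion (n : ℕ) (p : R[X]) : Matrix (Fin n) (Fin n) R :=
  of fun i j => if (j : ℕ) + 1 < n then (if (i : ℕ) = j + 1 then 1 else 0) else -p.coeff i

/-- The Krylov matrix with columns `v, A v, …, A ^ (n - 1) v`. -/
def krylov (A : Matrix (Fin n) (Fin n) R) (v : Fin n → R) : Matrix (Fin n) (Fin n) R :=
  of fun i j => (A ^ (j : ℕ) *ᵥ v) i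

theorem companion_map (f : R →+* S) (p : R[X]) : (companion n p).map f = companion n (p.map f) := by
  ext i j
  simp only [companion, map_apply, of_apply, Polynomial.coeff_map]
  split_ifs <;> simp

theorem trace_companion_zero : (companion n (0 : R[X])).trace = 0 := by
  simp [companion, trace]

theorem pow_mulVec_eq_neg_sum_coeff_charpoly (A : Matrix (Fin n) (Fin n) R) (v : Fin n → R) :
    A ^ n *ᵥ v = -∑ k : Fin n, A.charpoly.coeff k • (A ^ (k : ℕ) *ᵥ v) := by
  nontriviality R
  have coeff_n : A.charpoly.coeff n = 1 := by
    simpa [charpoly_natDegree_eq_dim] using A.charpoly_monic.coeff_natDegree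
  have cayley_hamilton := congrArg (· *ᵥ v) (aeval_self_charpoly A)
  simp only [Polynomial.aeval_eq_sum_range, charpoly_natDegree_eq_dim, Fintype.card_fin,
    Finset.sum_range_succ, coeff_n, one_smul, add_mulVec, sum_mulVec, smul_mulVec,
    zero_mulVec, Finset.sum_range] at cayley_hamilton
  exact eq_neg_of_add_eq_zero_right cayley_hamilton

theorem mul_krylov (A : Matrix (Fin n) (Fin n) R) (v : Fin n → R) :
    A * krylov A v = krylov A v * companion n A.charpoly := by
  ext i j
  have mul_krylov_apply : (A * krylov A v) i j = (A ^ ((j : ℕ) + 1) *ᵥ v) i := by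
    rw [pow_succ', ← mulVec_mulVec]
    rfl
  rw [mul_krylov_apply, mul_apply]
  by_cases hj : (j : ℕ) + 1 < n
  · rw [Finset.sum_eq_single ⟨j + 1, hj⟩] <;> simp +contextual [krylov, companion, hj, Fin.ext_iff]
  · have hjn : (j : ℕ) + 1 = n := by omega
    simp [hjn, pow_mulVec_eq_neg_sum_coeff_charpoly, krylov, companion, mul_comm]

theorem krylov_companion [NeZero n] (p : R[X]) :
    krylov (companion n p) (Pi.single 0 1) = 1 := by
  have pow_mulVec (k : ℕ) (hk : k < n) :
      companion n p ^ k *ᵥ Pi.single 0 1 = Pi.single (⟨k, hk⟩ : Fin n) 1 := by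
    induction k with
    | zero => rw [pow_zero, one_mulVec]; rfl
    | succ k ih =>
      rw [pow_succ', ← mulVec_mulVec, ih (by omega), mulVec_single_one]
      ext i
      simp [companion, hk, Pi.single_apply, Fin.ext_iff]
  ext i j
  rw [krylov, of_apply, pow_mulVec j j.2, Pi.single_apply, one_apply]

theorem inv_krylov_conj (A : Matrix (Fin n) (Fin n) R) (v : Fin n → R)
    (h : IsUnit (krylov A v).det) :
    (krylov A v)⁻¹ * A * krylov A v = companion n A.charpoly := by
  rw [Matrix.mul_assoc, mul_krylov, ← Matrix.mul_assoc, nonsing_inv_mul _ h, Matrix.one_mul]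

end Companion

section PolynomialFunctions

variable {m n R B C : Type*} [CommSemiring R] [CommSemiring B] [CommSemiring C] [Algebra R B]
  [Algebra R C]

/-- The algebra homomorphism sending a polynomial `Q` in the matrix entries to the value `Q(A)`,
where the entries of `A` may lie in any algebra over the coefficient ring of `Q`. -/
noncomputable def aevalEntries (A : Matrix m n B) : MvPolynomial (m × n) R →ₐ[R] B :=
  aeval fun ij => A ij.1 ij.2

theorem map_aevalEntries (f : B →ₐ[R] C) (A : Matrix m n B) (Q : MvPolynomial (m × n) R) :
    f (aevalEntries A Q) = aevalEntries (A.map f) Q :=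
  DFunLike.congr_fun (comp_aeval (fun ij : m × n => A ij.1 ij.2) f) Q

theorem aevalEntries_mem (S : Subalgebra R B) {A : Matrix m n B} (hA : ∀ i j, A i j ∈ S)
    (Q : MvPolynomial (m × n) R) : aevalEntries A Q ∈ S := by
  have := map_aevalEntries S.val (of fun i j => ⟨A i j, hA i j⟩) Q
  exact this ▸ Subtype.property _

end PolynomialFunctions

theorem map_aevalEntries_companion_charpoly {R B C : Type*} [CommSemiring R] [CommRing B]
    [CommRing C] [Algebra R B] [Algebra R C] {n : ℕ} (f : B →ₐ[R] C) (A : Matrix (Fin n) (Fin n) B)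
    (Q : MvPolynomial (Fin n × Fin n) R) :
    f (aevalEntries (companion n A.charpoly) Q) =
      aevalEntries (companion n (A.map f).charpoly) Q := by
  rw [map_aevalEntries, ← f.coe_toRingHom, companion_map, charpoly_map]

section Conjugation

variable {n X : Type*} [Fintype n] [DecidableEq n] [Nonempty n]

theorem exists_det_smul_eq_one {g : Matrix n n ℝ} (hg : 0 < g.det) :
    ∃ c : ℝˣ, (c • g).det = 1 := by
  have root_pos : 0 < g.det⁻¹ ^ ((Fintype.card n : ℝ)⁻¹) := Real.rpow_pos_of_pos (inv_pos.2 hg) _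
  refine ⟨Units.mk0 _ root_pos.ne', ?_⟩
  rw [Units.smul_mk0, det_smul, Real.rpow_inv_natCast_pow (inv_pos.2 hg).le Fintype.card_ne_zero,
    inv_mul_cancel₀ hg.ne']

theorem apply_conj_eq_of_det_pos {P : Matrix n n ℝ → X} {A : Matrix n n ℝ}
    (hP : ∀ g : Matrix n n ℝ, g.det = 1 → P (g * A * g⁻¹) = P A) {g : Matrix n n ℝ}
    (hg : 0 < g.det) : P (g * A * g⁻¹) = P A := by
  obtain ⟨c, hc⟩ := exists_det_smul_eq_one hg
  have smul_conj : (c • g) * A * (c • g)⁻¹ = g * A * g⁻¹ := by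
    rw [inv_smul' _ _ hg.ne'.isUnit, mul_smul_comm, smul_mul_assoc, smul_mul_assoc, inv_smul_smul]
  rw [← smul_conj, hP _ hc]

end Conjugation

section Invariants

open scoped Polynomial Topology

variable {n : ℕ} [NeZero n]

theorem apply_companion_charpoly_of_det_krylov_pos {X : Type*} {P : Matrix (Fin n) (Fin n) ℝ → X}
    {A : Matrix (Fin n) (Fin n) ℝ}
    (hP : ∀ g : Matrix (Fin n) (Fin n) ℝ, g.det = 1 → P (g * A * g⁻¹) = P A) {v : Fin n → ℝ}
    (hv : 0 < (krylov A v).det) : P (companion n A.charpoly) = P A := by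
  have det_inv_pos : 0 < ((krylov A v)⁻¹).det := by
    rw [det_nonsing_inv, Ring.inverse_eq_inv']
    exact inv_pos.2 hv
  have conj_eq := apply_conj_eq_of_det_pos hP det_inv_pos
  rwa [nonsing_inv_nonsing_inv _ hv.ne'.isUnit, inv_krylov_conj A v hv.ne'.isUnit] at conj_eq

theorem eventually_det_krylov_pos (p : ℝ[X]) :
    ∀ᶠ A in 𝓝 (companion n p), 0 < (krylov A (Pi.single 0 1)).det := by
  have continuous_det : Continuous fun A : Matrix (Fin n) (Fin n) ℝ =>
      (krylov A (Pi.single 0 1)).det :=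
    (continuous_matrix fun i j : Fin n => (continuous_apply i).comp <|
      (continuous_id.pow (j : ℕ)).matrix_mulVec continuous_const).matrix_det
  exact continuous_det.continuousAt.eventually_const_lt (by simp [krylov_companion])

theorem aevalEntries_companion_charpoly {Q : MvPolynomial (Fin n × Fin n) ℝ}
    (hQ : ∀ g A : Matrix (Fin n) (Fin n) ℝ, g.det = 1 → A.trace = 0 →
      aevalEntries (g * A * g⁻¹) Q = aevalEntries A Q)
    {A : Matrix (Fin n) (Fin n) ℝ} (hA : A.trace = 0) :
    aevalEntries (companion n A.charpoly) Q = aevalEntries A Q := by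
  let line (t : ℝ) : Matrix (Fin n) (Fin n) ℝ := A + t • (companion n 0 - A)
  let genericPoint : Matrix (Fin n) (Fin n) ℝ[X] :=
    A.map Polynomial.C + (Polynomial.X : ℝ[X]) • (companion n 0 - A).map Polynomial.C
  have genericPoint_map (t : ℝ) : genericPoint.map (Polynomial.aeval t) = line t := by
    ext i j
    simp [genericPoint, line]
  have trace_line (t : ℝ) : (line t).trace = 0 := by
    simp [line, hA, trace_companion_zero]
  have eval_genericPoint (t : ℝ) :
      (aevalEntries genericPoint Q).eval t = aevalEntries (line t) Q := by
    rw [← Polynomial.coe_aeval_eq_eval, map_aevalEntries, genericPoint_map]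
  have eval_companion (t : ℝ) : (aevalEntries (companion n genericPoint.charpoly) Q).eval t =
      aevalEntries (companion n (line t).charpoly) Q := by
    rw [← Polynomial.coe_aeval_eq_eval, map_aevalEntries_companion_charpoly, genericPoint_map]
  have eventually_pos : ∀ᶠ t in 𝓝 (1 : ℝ), 0 < (krylov (line t) (Pi.single 0 1)).det := by
    have tendsto_line : Filter.Tendsto line (𝓝 1) (𝓝 (companion n 0)) :=
      Continuous.tendsto' (by fun_prop) _ _ (by simp [line])
    exact tendsto_line.eventually (eventually_det_krylov_pos 0)
  have generic_eq : aevalEntries (companion n genericPoint.charpoly) Q =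
      aevalEntries genericPoint Q := by
    refine Polynomial.eq_of_infinite_eval_eq _ _
      ((infinite_of_mem_nhds 1 eventually_pos).mono fun t ht => ?_)
    change Polynomial.eval t _ = Polynomial.eval t _
    rw [eval_companion, eval_genericPoint]
    exact apply_companion_charpoly_of_det_krylov_pos
      (P := fun B => aevalEntries B Q) (fun g hg => hQ g _ hg (trace_line t)) ht
  simpa [eval_companion, eval_genericPoint, line] using congrArg (Polynomial.eval 0) generic_eq

end Invariants

section TraceAlgebra

variable {n : ℕ} {K B : Type*} [CommRing K] [CommRing B] [Algebra K B]

theorem exists_aevalEntries_companion_charpoly_eq_aeval_trace (hn : IsUnit (n.factorial : K))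
    {M : Matrix (Fin n) (Fin n) B} (hM : M.trace = 0) (Q : MvPolynomial (Fin n × Fin n) K) :
    ∃ F : MvPolynomial {i : ℕ // 2 ≤ i ∧ i ≤ n} K,
      aeval (fun i : {i : ℕ // 2 ≤ i ∧ i ≤ n} => (M ^ (i : ℕ)).trace) F =
        aevalEntries (companion n M.charpoly) Q := by
  let S : Subalgebra K B :=
    (aeval fun i : {i : ℕ // 2 ≤ i ∧ i ≤ n} => (M ^ (i : ℕ)).trace).range
  have trace_pow_mem (k : ℕ) (hk : 1 ≤ k) (hkn : k ≤ n) : (M ^ k).trace ∈ S := by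
    rcases hk.eq_or_lt with rfl | hk
    · rw [pow_one, hM]
      exact S.zero_mem
    · exact ⟨X ⟨k, hk, hkn⟩, aeval_X _ _⟩
  have coeff_mem (i : ℕ) : M.charpoly.coeff i ∈ S :=
    coeff_charpoly_mem_of_trace_pow_mem (by simpa using hn) S M (by simpa using trace_pow_mem) i
  refine aevalEntries_mem S (fun i j => ?_) Q
  rw [companion, of_apply]
  split_ifs
  exacts [S.one_mem, S.zero_mem, S.neg_mem (coeff_mem i)]

-- Work with the tautological matrix over the ring of functions on the trace-zero matrices.
theorem exists_forall_aevalEntries_companion_charpoly_eq_eval_trace (hn : IsUnit (n.factorial : K))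
    (Q : MvPolynomial (Fin n × Fin n) K) :
    ∃ F : MvPolynomial {i : ℕ // 2 ≤ i ∧ i ≤ n} K,
      ∀ A : Matrix (Fin n) (Fin n) K, A.trace = 0 →
        aevalEntries (companion n A.charpoly) Q =
          eval (fun i : {i : ℕ // 2 ≤ i ∧ i ≤ n} => (A ^ (i : ℕ)).trace) F := by
  let M : Matrix (Fin n) (Fin n) ({A : Matrix (Fin n) (Fin n) K // A.trace = 0} → K) :=
    of fun i j A => A.1 i j
  have trace_M : M.trace = 0 :=
    funext fun A => (AddMonoidHom.map_trace (Pi.evalAddMonoidHom _ A) M).trans A.2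
  obtain ⟨F, hF⟩ := exists_aevalEntries_companion_charpoly_eq_aeval_trace hn trace_M Q
  refine ⟨F, fun A hA => ?_⟩
  let evalAt := Pi.evalAlgHom K (fun _ : {A : Matrix (Fin n) (Fin n) K // A.trace = 0} => K) ⟨A, hA⟩
  have M_map : M.map evalAt = A := rfl
  have evalAt_eq := congrArg evalAt hF
  rw [map_aevalEntries_companion_charpoly, comp_aeval_apply] at evalAt_eq
  simpa only [map_trace_pow, M_map, aeval_eq_eval] using evalAt_eq.symm

end TraceAlgebra

/-- The generation part of Theorem 6.1: a polynomial function `P` on `n × n` real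
matrices which is invariant under conjugation by matrices of determinant `1` on the
trace-zero matrices is, on trace-zero matrices, a polynomial in
`tr(A²), tr(A³), …, tr(Aⁿ)`. -/
theorem SLn_invariants_generated_by_traces
    (n : ℕ) (hn : 2 ≤ n) (P : Matrix (Fin n) (Fin n) ℝ → ℝ)
    (hpoly : ∃ Q : MvPolynomial (Fin n × Fin n) ℝ,
      ∀ A : Matrix (Fin n) (Fin n) ℝ, P A = eval (fun ij => A ij.1 ij.2) Q)
    (hinv : ∀ g A : Matrix (Fin n) (Fin n) ℝ, g.det = 1 → A.trace = 0 →
      P (g * A * g⁻¹) = P A) :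
    ∃ F : MvPolynomial {i : ℕ // 2 ≤ i ∧ i ≤ n} ℝ,
      ∀ A : Matrix (Fin n) (Fin n) ℝ, A.trace = 0 →
        P A = eval (fun i : {i : ℕ // 2 ≤ i ∧ i ≤ n} => (A ^ (i : ℕ)).trace) F := by
  have : NeZero n := ⟨by omega⟩
  obtain ⟨Q, hPQ⟩ := hpoly
  obtain rfl : P = fun A => aevalEntries A Q := funext hPQ
  obtain ⟨F, hF⟩ := exists_forall_aevalEntries_companion_charpoly_eq_eval_trace
    (Nat.cast_ne_zero.2 n.factorial_ne_zero).isUnit Q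
  exact ⟨F, fun A hA => (aevalEntries_companion_charpoly hinv hA).symm.trans (hF A hA)⟩
end
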